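/- Let X be uniform on {0,1}, let A be binary with P(A=0|X=1)=P(A=1|X=0)=α for some α∈[0,1] (so P(A=X)=1−α), and given (X,A) let Y be generated as follows: if A=0, Y is the output of the Z-channel with parameter δ (P(Y=0|X=0)=1, P(Y=0|X=1)=δ, P(Y=1|X=1)=1−δ); if A=1, Y is the output of the S-channel with parameter δ (P(Y=1|X=1)=1, P(Y=1|X=0)=δ, P(Y=0|X=0)=1−δ), where δ∈[0,1]. Then I(X;A) + H(X|(Y,A)) = 1 − h(α) + h( αδ/(1−α+αδ) )·(1−α+αδ), where h is the binary entropy function (with the convention that the second term is 0 when 1−α+αδ=0). -/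

import Mathlib

open scoped BigOperators

noncomputable section

/-- Probability mass of the event `f = a` under the weight function `q` on a finite space. -/
def pmass {Ω α : Type*} [Fintype Ω] [DecidableEq α] (q : Ω → ℝ) (f : Ω → α) (a : α) : ℝ :=
  ∑ ω, if f ω = a then q ω else 0

/-- Shannon entropy (in bits) of the value of `f` under `q`. -/
def ent {Ω α : Type*} [Fintype Ω] [Fintype α] [DecidableEq α] (q : Ω → ℝ) (f : Ω → α) : ℝ :=
  -∑ a, pmass q f a * Real.logb 2 (pmass q f a)

/-- Conditional Shannon entropy `H(f ∣ g)` (in bits). -/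
def condEnt {Ω α β : Type*} [Fintype Ω] [Fintype α] [DecidableEq α] [Fintype β] [DecidableEq β]
    (q : Ω → ℝ) (f : Ω → α) (g : Ω → β) : ℝ :=
  ent q (fun ω => (f ω, g ω)) - ent q g

/-- Mutual information `I(f ; g)` (in bits). -/
def mutInf {Ω α β : Type*} [Fintype Ω] [Fintype α] [DecidableEq α] [Fintype β] [DecidableEq β]
    (q : Ω → ℝ) (f : Ω → α) (g : Ω → β) : ℝ :=
  ent q f + ent q g - ent q (fun ω => (f ω, g ω))

/-- Conditional mutual information `I(f ; g ∣ h)` (in bits). -/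
def condMutInf {Ω α β γ : Type*} [Fintype Ω] [Fintype α] [DecidableEq α] [Fintype β]
    [DecidableEq β] [Fintype γ] [DecidableEq γ]
    (q : Ω → ℝ) (f : Ω → α) (g : Ω → β) (h : Ω → γ) : ℝ :=
  condEnt q f h - condEnt q f (fun ω => (g ω, h ω))

/-- `q` is a probability mass function on `Ω`. -/
def IsPMF {Ω : Type*} [Fintype Ω] (q : Ω → ℝ) : Prop :=
  (∀ ω, 0 ≤ q ω) ∧ ∑ ω, q ω = 1

/-- The binary entropy function (in bits), with the convention `0·log₂0 = 0`. -/
def binEnt (t : ℝ) : ℝ := -(t * Real.logb 2 t) - (1 - t) * Real.logb 2 (1 - t)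

/-!
Put `Z = X ⊕ A` and `W = Y ⊕ A`. Flipping both input and output exchanges the Z-channel and the
S-channel, so `(Z, W)` is an input-output pair of the Z-channel with `P(Z = 1) = α`, independent
of `A`. Since `X ↦ Z` and `Y ↦ W` are permutations once `A` is known, `H(X ∣ A) = H(Z ∣ A) = H(Z)`
and `H(X ∣ Y, A) = H(Z ∣ W, A) = H(Z ∣ W)`, so the rate is `H(X) - H(Z) + H(Z ∣ W)`. The output
`W = 1` forces `Z = 1`, so only `W = 0` contributes to `H(Z ∣ W)`.
-/

section Entropy

variable {Ω α β γ : Type*} [Fintype Ω] [DecidableEq α] [DecidableEq β] [DecidableEq γ]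
  {q : Ω → ℝ} {f : Ω → α} {g : Ω → β} {k : Ω → γ}

theorem pmass_nonneg (hq : ∀ ω, 0 ≤ q ω) (a : α) : 0 ≤ pmass q f a :=
  Finset.sum_nonneg fun ω _ => by split_ifs <;> simp only [hq ω, le_refl]

theorem sum_pmass [Fintype α] (q : Ω → ℝ) (f : Ω → α) : ∑ a, pmass q f a = ∑ ω, q ω := by
  simp only [pmass]
  rw [Finset.sum_comm]
  simp only [Finset.sum_ite_eq, Finset.mem_univ, if_true]

theorem pmass_comp [Fintype α] (q : Ω → ℝ) (f : Ω → α) (φ : α → β) (b : β) :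
    pmass q (fun ω => φ (f ω)) b = ∑ a, if φ a = b then pmass q f a else 0 := by
  simp only [pmass, ← Finset.sum_filter]
  rw [Finset.sum_comm' (t' := Finset.univ.filter fun ω => φ (f ω) = b) (s' := fun ω => {f ω})
    (by aesop)]
  simp only [Finset.sum_singleton]

theorem pmass_comp_equiv (q : Ω → ℝ) (f : Ω → α) (e : α ≃ β) (b : β) :
    pmass q (fun ω => e (f ω)) b = pmass q f (e.symm b) := by
  simp only [pmass, Equiv.eq_symm_apply]

theorem sum_pmass_prod_left [Fintype α] (q : Ω → ℝ) (f : Ω → α) (g : Ω → β) (b : β) :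
    ∑ a, pmass q (fun ω => (f ω, g ω)) (a, b) = pmass q g b := by
  simp only [pmass, Prod.mk.injEq, ite_and]
  rw [Finset.sum_comm]
  simp only [Finset.sum_ite_eq, Finset.mem_univ, if_true]

theorem sum_pmass_prod_right [Fintype β] (q : Ω → ℝ) (f : Ω → α) (g : Ω → β) (a : α) :
    ∑ b, pmass q (fun ω => (f ω, g ω)) (a, b) = pmass q f a := by
  rw [← sum_pmass_prod_left q g f a]
  exact Finset.sum_congr rfl fun b _ =>
    (pmass_comp_equiv q (fun ω => (f ω, g ω)) (Equiv.prodComm α β) (b, a)).symm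

theorem ent_eq_sum_negMulLog [Fintype α] (q : Ω → ℝ) (f : Ω → α) :
    ent q f = (∑ a, Real.negMulLog (pmass q f a)) / Real.log 2 := by
  simp only [ent, Real.negMulLog, Real.logb, Finset.sum_div, ← Finset.sum_neg_distrib]
  exact Finset.sum_congr rfl fun a _ => by ring

theorem ent_comp_equiv [Fintype α] [Fintype β] (q : Ω → ℝ) (f : Ω → α) (e : α ≃ β) :
    ent q (fun ω => e (f ω)) = ent q f := by
  simp only [ent, pmass_comp_equiv]
  rw [e.symm.sum_comp fun a => pmass q f a * Real.logb 2 (pmass q f a)]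

theorem condEnt_relabel {α' β' : Type*} [Fintype α] [Fintype β] [Fintype α'] [DecidableEq α']
    [Fintype β'] [DecidableEq β'] (q : Ω → ℝ) (f : Ω → α) (g : Ω → β)
    (σ : β → α ≃ α') (τ : β ≃ β') :
    condEnt q (fun ω => σ (g ω) (f ω)) (fun ω => τ (g ω)) = condEnt q f g := by
  simp only [condEnt]
  rw [ent_comp_equiv q g τ, ← ent_comp_equiv q (fun ω => (f ω, g ω))
    ((Equiv.prodCongrLeft σ).trans ((Equiv.refl α').prodCongr τ))]
  rfl

theorem mutInf_eq_ent_sub_condEnt [Fintype α] [Fintype β] (q : Ω → ℝ) (f : Ω → α) (g : Ω → β) :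
    mutInf q f g = ent q f - condEnt q f g := by
  simp only [mutInf, condEnt]
  ring

/-- Independence of `f` and `g` under the weight function `q`: the joint mass factors as the
product of the marginal masses. -/
def PMassIndep (q : Ω → ℝ) (f : Ω → α) (g : Ω → β) : Prop :=
  ∀ a b, pmass q (fun ω => (f ω, g ω)) (a, b) = pmass q f a * pmass q g b

theorem pmass_eq_of_prod_eq_mul [Fintype β] {u : α → ℝ} {v : β → ℝ}
    (huv : ∀ a b, pmass q (fun ω => (f ω, g ω)) (a, b) = u a * v b) (hv : ∑ b, v b = 1) (a : α) :
    pmass q f a = u a := by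
  rw [← sum_pmass_prod_right q f g a]
  simp only [huv, ← Finset.mul_sum, hv, mul_one]

theorem PMassIndep.of_eq_mul [Fintype α] [Fintype β] {u : α → ℝ} {v : β → ℝ}
    (huv : ∀ a b, pmass q (fun ω => (f ω, g ω)) (a, b) = u a * v b)
    (hu : ∑ a, u a = 1) (hv : ∑ b, v b = 1) : PMassIndep q f g := by
  intro a b
  rw [huv, pmass_eq_of_prod_eq_mul huv hv, ← sum_pmass_prod_left q f g b]
  simp only [huv, ← Finset.sum_mul, hu, one_mul]

theorem PMassIndep.comp_left [Finite α] [Finite β] (h : PMassIndep q f g) (φ : α → γ) :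
    PMassIndep q (fun ω => φ (f ω)) g := by
  cases nonempty_fintype α
  cases nonempty_fintype β
  intro c b
  refine (pmass_comp q (fun ω => (f ω, g ω)) (Prod.map φ id) (c, b)).trans ?_
  rw [pmass_comp q f φ c]
  simp only [Fintype.sum_prod_type, Prod.map_apply, id, Prod.mk.injEq, ite_and, h _ _,
    Finset.sum_mul, ite_mul, zero_mul]
  exact Finset.sum_congr rfl fun a _ => by
    split_ifs <;> simp only [Finset.sum_ite_eq', Finset.mem_univ, if_true, Finset.sum_const_zero]

theorem PMassIndep.ent_prod [Fintype α] [Fintype β] (h : PMassIndep q f g)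
    (hq : ∑ ω, q ω = 1) : ent q (fun ω => (f ω, g ω)) = ent q f + ent q g := by
  simp only [ent_eq_sum_negMulLog, Fintype.sum_prod_type, h _ _, Real.negMulLog_mul,
    Finset.sum_add_distrib, ← Finset.sum_mul, ← Finset.mul_sum, sum_pmass, hq]
  ring

theorem PMassIndep.condEnt_eq_ent [Fintype α] [Fintype β] (h : PMassIndep q f g)
    (hq : ∑ ω, q ω = 1) : condEnt q f g = ent q f := by
  rw [condEnt, h.ent_prod hq, add_sub_cancel_right]

theorem PMassIndep.condEnt_prod_eq_condEnt [Fintype α] [Fintype β] [Fintype γ]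
    (h : PMassIndep q (fun ω => (f ω, g ω)) k) (hq : ∑ ω, q ω = 1) :
    condEnt q f (fun ω => (g ω, k ω)) = condEnt q f g := by
  have hassoc : ent q (fun ω => (f ω, g ω, k ω)) = ent q (fun ω => ((f ω, g ω), k ω)) :=
    ent_comp_equiv q (fun ω => ((f ω, g ω), k ω)) (Equiv.prodAssoc α β γ)
  rw [condEnt, condEnt, hassoc, h.ent_prod hq, (h.comp_left Prod.snd).ent_prod hq,
    add_sub_add_right_eq_sub]

theorem mutInf_add_condEnt_of_indep_relabel [Fintype α] [Fintype β] [Fintype γ]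
    (σ : γ → Equiv.Perm α) (τ : γ → Equiv.Perm β) (hq : ∑ ω, q ω = 1)
    (h : PMassIndep q (fun ω => (σ (k ω) (f ω), τ (k ω) (g ω))) k) :
    mutInf q f k + condEnt q f (fun ω => (g ω, k ω)) =
      ent q f - ent q (fun ω => σ (k ω) (f ω)) +
        condEnt q (fun ω => σ (k ω) (f ω)) (fun ω => τ (k ω) (g ω)) := by
  have hfk : condEnt q f k = ent q (fun ω => σ (k ω) (f ω)) := by
    rw [← condEnt_relabel q f k σ (Equiv.refl γ)]
    exact (h.comp_left Prod.fst).condEnt_eq_ent hq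
  have hfgk : condEnt q f (fun ω => (g ω, k ω)) =
      condEnt q (fun ω => σ (k ω) (f ω)) (fun ω => τ (k ω) (g ω)) := by
    rw [← condEnt_relabel q f (fun ω => (g ω, k ω)) (fun b => σ b.2) (Equiv.prodCongrLeft τ)]
    exact h.condEnt_prod_eq_condEnt hq
  rw [mutInf_eq_ent_sub_condEnt, hfk, hfgk]

end Entropy

section BinaryEntropy

theorem binEnt_eq_binEntropy_div (t : ℝ) : binEnt t = Real.binEntropy t / Real.log 2 := by
  simp only [binEnt, Real.logb, Real.binEntropy_eq_negMulLog_add_negMulLog_one_sub, Real.negMulLog]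
  ring

theorem binEnt_half : binEnt (1 / 2) = 1 := by
  rw [binEnt_eq_binEntropy_div, one_div, Real.binEntropy_two_inv]
  exact div_self (Real.log_pos one_lt_two).ne'

theorem binEnt_div_self (t : ℝ) : binEnt (t / t) = 0 := by
  rcases eq_or_ne t 0 with rfl | ht
  · rw [div_zero, binEnt_eq_binEntropy_div, Real.binEntropy_zero, zero_div]
  · rw [div_self ht, binEnt_eq_binEntropy_div, Real.binEntropy_one, zero_div]

theorem negMulLog_add_negMulLog {u v : ℝ} (hu : 0 ≤ u) (hv : 0 ≤ v) :
    Real.negMulLog u + Real.negMulLog v =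
      Real.negMulLog (u + v) + (u + v) * Real.binEntropy (u / (u + v)) := by
  rcases eq_or_ne (u + v) 0 with hs | hs
  · obtain ⟨rfl, rfl⟩ := (add_eq_zero_iff_of_nonneg hu hv).mp hs
    simp only [add_zero, Real.negMulLog_zero, zero_mul]
  · have hmul (x : ℝ) : Real.negMulLog x = x / (u + v) * Real.negMulLog (u + v) +
        (u + v) * Real.negMulLog (x / (u + v)) := by
      rw [← Real.negMulLog_mul, mul_div_cancel₀ x hs]
    have hv' : 1 - u / (u + v) = v / (u + v) := by field_simp; ring
    rw [Real.binEntropy_eq_negMulLog_add_negMulLog_one_sub, hv', hmul u, hmul v]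
    field_simp
    ring

variable {Ω β : Type*} [Fintype Ω] [Fintype β] [DecidableEq β] {q : Ω → ℝ}

theorem ent_bool (hq : ∑ ω, q ω = 1) (f : Ω → Bool) : ent q f = binEnt (pmass q f true) := by
  have hfalse : pmass q f false = 1 - pmass q f true := by
    rw [← hq, ← sum_pmass q f, Fintype.sum_bool, add_sub_cancel_left]
  rw [ent_eq_sum_negMulLog, Fintype.sum_bool, hfalse, binEnt_eq_binEntropy_div,
    Real.binEntropy_eq_negMulLog_add_negMulLog_one_sub]

theorem condEnt_bool (hq : ∀ ω, 0 ≤ q ω) (f : Ω → Bool) (g : Ω → β) :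
    condEnt q f g = ∑ b, pmass q g b *
      binEnt (pmass q (fun ω => (f ω, g ω)) (true, b) / pmass q g b) := by
  have hsplit (b : β) : pmass q g b = pmass q (fun ω => (f ω, g ω)) (true, b) +
      pmass q (fun ω => (f ω, g ω)) (false, b) := by
    rw [← sum_pmass_prod_left q f g b, Fintype.sum_bool]
  simp only [condEnt, ent_eq_sum_negMulLog, binEnt_eq_binEntropy_div, Fintype.sum_prod_type_right,
    Fintype.sum_bool, negMulLog_add_negMulLog (pmass_nonneg hq _) (pmass_nonneg hq _), ← hsplit,
    Finset.sum_add_distrib, mul_div_assoc', ← Finset.sum_div]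
  ring

end BinaryEntropy

section ZChannel

/-- Joint law of the input (first coordinate, equal to `1` with probability `α`) and the output
(second coordinate) of the Z-channel with parameter `δ`. -/
def zChannelLaw (α δ : ℝ) : Bool × Bool → ℝ
  | (false, false) => 1 - α
  | (false, true) => 0
  | (true, false) => α * δ
  | (true, true) => α * (1 - δ)

theorem sum_zChannelLaw (α δ : ℝ) : ∑ b, zChannelLaw α δ b = 1 := by
  simp only [Fintype.sum_prod_type, Fintype.sum_bool, zChannelLaw]
  ring

/-- Addition of the bit `a` modulo 2, as a permutation of `Bool`. -/
def xorPerm (a : Bool) : Equiv.Perm Bool :=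
  Function.Involutive.toPerm (· ^^ a) fun b => by simp

variable {Ω : Type*} [Fintype Ω] {p : Ω → ℝ} {α δ : ℝ}

theorem ent_zChannel_input {Z W : Ω → Bool} (hp : ∑ ω, p ω = 1)
    (hlaw : ∀ b, pmass p (fun ω => (Z ω, W ω)) b = zChannelLaw α δ b) : ent p Z = binEnt α := by
  have hZ : pmass p Z true = α := by
    rw [← sum_pmass_prod_right p Z W true]
    simp only [Fintype.sum_bool, hlaw, zChannelLaw]
    ring
  rw [ent_bool hp, hZ]

theorem condEnt_zChannel {Z W : Ω → Bool} (hp : ∀ ω, 0 ≤ p ω)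
    (hlaw : ∀ b, pmass p (fun ω => (Z ω, W ω)) b = zChannelLaw α δ b) :
    condEnt p Z W = binEnt (α * δ / (1 - α + α * δ)) * (1 - α + α * δ) := by
  have hW (w : Bool) : pmass p W w = zChannelLaw α δ (true, w) + zChannelLaw α δ (false, w) := by
    rw [← sum_pmass_prod_left p Z W w, Fintype.sum_bool, hlaw, hlaw]
  simp only [condEnt_bool hp, Fintype.sum_bool, hW, hlaw, zChannelLaw, add_zero, binEnt_div_self,
    mul_zero, zero_add]
  rw [add_comm (α * δ), mul_comm]

theorem pmass_xorPerm (X A Y : Ω → Bool) (z w a : Bool) :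
    pmass p (fun ω => ((xorPerm (A ω) (X ω), xorPerm (A ω) (Y ω)), A ω)) ((z, w), a) =
      pmass p (fun ω => (X ω, A ω, Y ω)) (xorPerm a z, a, xorPerm a w) := by
  have hiff : ∀ x a' y : Bool, ((xorPerm a' x, xorPerm a' y), a') = ((z, w), a) ↔
      (x, a', y) = (xorPerm a z, a, xorPerm a w) := by
    revert z w a
    decide
  simp only [pmass, hiff]

end ZChannel

/-- `X` uniform on `{0,1}` (encoded as `Bool`, `false = 0`, `true = 1`),
`A` binary with `P(A=0|X=1) = P(A=1|X=0) = α` (so `P(A = X) = 1−α`), and given `(X,A)`: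
if `A=0`, `Y` is the Z-channel output (`P(Y=0|X=0)=1`, `P(Y=0|X=1)=δ`, `P(Y=1|X=1)=1−δ`);
if `A=1`, `Y` is the S-channel output (`P(Y=1|X=1)=1`, `P(Y=1|X=0)=δ`, `P(Y=0|X=0)=1−δ`).
Then `I(X;A) + H(X|(Y,A)) = 1 − h(α) + h(αδ/(1−α+αδ))·(1−α+αδ)` (with the second term
equal to `0` when `1−α+αδ = 0`, which is automatic since division by zero yields `0`). -/
theorem zschannel_rate_identity {Ω : Type*} [Fintype Ω] (p : Ω → ℝ) (hp : IsPMF p)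
    (α δ : ℝ) (hα0 : 0 ≤ α) (hα1 : α ≤ 1) (hδ0 : 0 ≤ δ) (hδ1 : δ ≤ 1)
    (X A Y : Ω → Bool)
    (hjoint : ∀ x a y : Bool, pmass p (fun ω => (X ω, A ω, Y ω)) (x, a, y) =
      (1 / 2) * (if a = x then 1 - α else α) *
        (if a = false then
            (if x = false then (if y = false then 1 else 0)
             else (if y = false then δ else 1 - δ))
          else
            (if x = true then (if y = true then 1 else 0)
             else (if y = true then δ else 1 - δ)))) :
    mutInf p X A + condEnt p X (fun ω => (Y ω, A ω)) =
      1 - binEnt α + binEnt (α * δ / (1 - α + α * δ)) * (1 - α + α * δ) := by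
  obtain ⟨hp_nonneg, hp_sum⟩ := hp
  have hlaw (b : Bool × Bool) (a : Bool) :
      pmass p (fun ω => ((xorPerm (A ω) (X ω), xorPerm (A ω) (Y ω)), A ω)) (b, a) =
        zChannelLaw α δ b * (1 / 2) := by
    obtain ⟨z, w⟩ := b
    rw [pmass_xorPerm, hjoint]
    cases z <;> cases w <;> cases a <;>
      simp only [xorPerm, Function.Involutive.coe_toPerm, Bool.bne_true, Bool.bne_false,
        Bool.not_true, Bool.not_false, reduceCtorEq, if_true, if_false, zChannelLaw] <;> ring
  have hbit : ∑ _a : Bool, (1 / 2 : ℝ) = 1 := by norm_num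
  have hindep := PMassIndep.of_eq_mul hlaw (sum_zChannelLaw α δ) hbit
  have hZW := pmass_eq_of_prod_eq_mul hlaw hbit
  have hX : ent p X = 1 := by
    have hX1 : pmass p X true = 1 / 2 := by
      rw [← sum_pmass_prod_right p X fun ω => (A ω, Y ω)]
      simp only [Fintype.sum_prod_type, Fintype.sum_bool, hjoint, reduceCtorEq, if_true, if_false]
      ring
    rw [ent_bool hp_sum, hX1, binEnt_half]
  rw [mutInf_add_condEnt_of_indep_relabel xorPerm xorPerm hp_sum hindep, hX,
    ent_zChannel_input hp_sum hZW, condEnt_zChannel hp_nonneg hZW]
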